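/- Let Ω ⊆ ℝ be open, let D(y) = yF₀ + y'F₁ + y''F₂ with F_i : Ω → Matrix N N ℂ sufficiently differentiable, let P : Ω → Matrix N N ℂ be twice differentiable with D(P) = Γ·P for a constant matrix Γ, and with P(t) and P'(t) invertible for every t ∈ Ω. Let U : Ω → Matrix N N ℂ be differentiable and invertible. Set A₀ = −U, A₁ = (P')⁻¹PU, B₁ = A₁⁻¹F₂, B₀ = A₁⁻¹(F₁ − A₀B₁ − A₁'B₁), Ψ = A₀B₀ + A₀'B₁ − F₀, and 𝒜(y) = yA₀ + y'A₁. Then: (i) Ψ = −P⁻¹ΓP on Ω, and (ii) 𝒜(Ψ) = A₀A₁⁻¹ΨA₁, i.e. ΨA₀ + Ψ'A₁ = A₀A₁⁻¹ΨA₁. Consequently, for every twice differentiable Q : Ω → Matrix N N ℂ with D(Q) = Λ·Q (Λ a constant matrix) and Q(t) invertible on Ω, the function 𝒜(Q) satisfies 𝒟(𝒜(Q)) = Λ·𝒜(Q), where 𝒟(y) = 𝒜(ℬ(y)) − yA₁⁻¹ΨA₁ and ℬ(y) = yB₀ + y'B₁. -/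

import Mathlib

/-!
Write `𝒜(y) = yA₀ + y'A₁` and `ℬ(y) = yB₀ + y'B₁`. The coefficients `B₀`, `B₁` are chosen so that
`ℬ(𝒜(y)) = D(y) + yΨ` for every twice differentiable `y` (`factor_apply`), and the seed satisfies
`𝒜(P) = -PU + P'(P')⁻¹PU = 0`. Evaluating the factorization at `P` therefore gives
`0 = ΓP + PΨ`, i.e. `Ψ = -P⁻¹ΓP`. Differentiating this formula, together with
`A₀A₁⁻¹ = -P⁻¹P'`, gives the compatibility condition `𝒜(Ψ) = A₀A₁⁻¹ΨA₁`. Finally, for an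
eigenfunction `Q`, one has `ℬ(𝒜(Q)) = ΛQ + QΨ` on the open set `Ω`; applying `𝒜` and the
compatibility condition yields `𝒜(ℬ(𝒜(Q))) = Λ𝒜(Q) + 𝒜(Q)A₁⁻¹ΨA₁`.

The entrywise derivative `matDeriv` is handled by identifying it with the derivative of a
matrix-valued function for a submultiplicative matrix norm (`hasDerivAt_iff_entries`), which makes
the noncommutative product rule and the differentiability of the inverse available.
-/

open Matrix

noncomputable section

abbrev Mat (N : ℕ) := Matrix (Fin N) (Fin N) ℂ

def matDeriv {N : ℕ} (f : ℝ → Mat N) : ℝ → Mat N :=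
  fun t => Matrix.of fun i j => deriv (fun s => f s i j) t

def DiffOn {N : ℕ} (Ω : Set ℝ) (f : ℝ → Mat N) : Prop :=
  ∀ (i j : Fin N), ∀ t ∈ Ω, DifferentiableAt ℝ (fun s => f s i j) t

def TwiceDiffOn {N : ℕ} (Ω : Set ℝ) (f : ℝ → Mat N) : Prop :=
  DiffOn Ω f ∧ DiffOn Ω (matDeriv f)

def firstOrd {N : ℕ} (A₀ A₁ : ℝ → Mat N) (y : ℝ → Mat N) : ℝ → Mat N :=
  fun t => y t * A₀ t + matDeriv y t * A₁ t

def secondOrd {N : ℕ} (F₀ F₁ F₂ : ℝ → Mat N) (y : ℝ → Mat N) : ℝ → Mat N :=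
  fun t => y t * F₀ t + matDeriv y t * F₁ t + matDeriv (matDeriv y) t * F₂ t

section Calculus

attribute [local instance] Matrix.linftyOpNormedRing Matrix.linftyOpNormedAlgebra

variable {N : ℕ} {f g : ℝ → Mat N} {t : ℝ}

theorem hasDerivAt_iff_entries {f' : Mat N} :
    HasDerivAt f f' t ↔ ∀ i j, HasDerivAt (fun s => f s i j) (f' i j) t := by
  constructor
  · intro h i j
    let L : Mat N →L[ℝ] ℂ := LinearMap.toContinuousLinearMap (Matrix.entryLinearMap ℝ ℂ i j)
    exact L.hasFDerivAt.comp_hasDerivAt t h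
  · intro h
    -- The identity from the sup norm to the operator norm is continuous in finite dimension.
    let e : (Fin N → Fin N → ℂ) →L[ℝ] Mat N :=
      LinearMap.toContinuousLinearMap (Matrix.ofLinearEquiv ℝ).toLinearMap
    have h2 : HasDerivAt (fun s => (fun i j => f s i j : Fin N → Fin N → ℂ))
        (fun i j => f' i j) t :=
      hasDerivAt_pi.2 fun i => hasDerivAt_pi.2 fun j => h i j
    exact e.hasFDerivAt.comp_hasDerivAt t h2

theorem matDeriv_eq {f' : Mat N} (h : HasDerivAt f f' t) : matDeriv f t = f' := by
  ext i j
  exact (hasDerivAt_iff_entries.1 h i j).deriv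

theorem hasDerivAt_of_entries (h : ∀ i j, DifferentiableAt ℝ (fun s => f s i j) t) :
    HasDerivAt f (matDeriv f t) t :=
  hasDerivAt_iff_entries.2 fun i j => (h i j).hasDerivAt

theorem DiffOn.hasDerivAt {Ω : Set ℝ} (h : DiffOn Ω f) (ht : t ∈ Ω) :
    HasDerivAt f (matDeriv f t) t :=
  hasDerivAt_of_entries fun i j => h i j t ht

theorem diffOn_of_hasDerivAt {Ω : Set ℝ} {f' : ℝ → Mat N}
    (h : ∀ t ∈ Ω, HasDerivAt f (f' t) t) : DiffOn Ω f :=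
  fun i j t ht => (hasDerivAt_iff_entries.1 (h t ht) i j).differentiableAt

theorem DiffOn.mul {Ω : Set ℝ} (hf : DiffOn Ω f) (hg : DiffOn Ω g) :
    DiffOn Ω (fun s => f s * g s) :=
  diffOn_of_hasDerivAt fun _ ht => (hf.hasDerivAt ht).mul (hg.hasDerivAt ht)

theorem DiffOn.neg {Ω : Set ℝ} (hf : DiffOn Ω f) : DiffOn Ω (fun s => -f s) :=
  diffOn_of_hasDerivAt fun _ ht => (hf.hasDerivAt ht).neg

theorem DiffOn.inv {Ω : Set ℝ} (hf : DiffOn Ω f) (hu : ∀ t ∈ Ω, IsUnit (f t)) :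
    DiffOn Ω (fun s => (f s)⁻¹) := by
  refine diffOn_of_hasDerivAt (f' := deriv fun s => (f s)⁻¹) fun t ht => ?_
  simp only [Matrix.nonsing_inv_eq_ringInverse]
  have h : DifferentiableAt ℝ (Ring.inverse : Mat N → Mat N) (f t) := by
    obtain ⟨u, hu⟩ := hu t ht
    have : CompleteSpace (Mat N) := FiniteDimensional.complete ℝ _
    rw [← hu]
    exact (hasFDerivAt_ringInverse (𝕜 := ℝ) u).differentiableAt
  exact (h.comp t (hf.hasDerivAt ht).differentiableAt).hasDerivAt

theorem matDeriv_const_mul {Ω : Set ℝ} (C : Mat N) (hf : DiffOn Ω f) (ht : t ∈ Ω) :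
    matDeriv (fun s => C * f s) t = C * matDeriv f t :=
  matDeriv_eq ((hf.hasDerivAt ht).const_mul C)

theorem DiffOn.const_mul {Ω : Set ℝ} (C : Mat N) (hf : DiffOn Ω f) : DiffOn Ω (fun s => C * f s) :=
  diffOn_of_hasDerivAt fun _ ht => (hf.hasDerivAt ht).const_mul C

theorem matDeriv_mul {Ω : Set ℝ} (hf : DiffOn Ω f) (hg : DiffOn Ω g) (ht : t ∈ Ω) :
    matDeriv (fun s => f s * g s) t = matDeriv f t * g t + f t * matDeriv g t :=
  matDeriv_eq ((hf.hasDerivAt ht).mul (hg.hasDerivAt ht))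

theorem matDeriv_neg {Ω : Set ℝ} (hf : DiffOn Ω f) (ht : t ∈ Ω) :
    matDeriv (fun s => -f s) t = -matDeriv f t :=
  matDeriv_eq (hf.hasDerivAt ht).neg

theorem matDeriv_add {Ω : Set ℝ} (hf : DiffOn Ω f) (hg : DiffOn Ω g) (ht : t ∈ Ω) :
    matDeriv (fun s => f s + g s) t = matDeriv f t + matDeriv g t :=
  matDeriv_eq ((hf.hasDerivAt ht).add (hg.hasDerivAt ht))

/-- On an open set, `matDeriv` depends only on the values of the function on that set. -/
theorem matDeriv_congr {Ω : Set ℝ} (hΩ : IsOpen Ω) (h : ∀ s ∈ Ω, f s = g s) (ht : t ∈ Ω) :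
    matDeriv f t = matDeriv g t := by
  ext i j
  refine Filter.EventuallyEq.deriv_eq ?_
  filter_upwards [hΩ.mem_nhds ht] with s hs
  rw [h s hs]

/-- `(f⁻¹)' = -f⁻¹ f' f⁻¹`, obtained by differentiating `f⁻¹ f = 1`. -/
theorem matDeriv_inv {Ω : Set ℝ} (hΩ : IsOpen Ω) (hf : DiffOn Ω f)
    (hu : ∀ t ∈ Ω, IsUnit (f t)) (ht : t ∈ Ω) :
    matDeriv (fun s => (f s)⁻¹) t = -((f t)⁻¹ * matDeriv f t * (f t)⁻¹) := by
  have hdet := (Matrix.isUnit_iff_isUnit_det _).1 (hu t ht)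
  have h1 := matDeriv_mul (hf.inv hu) hf ht
  have h2 : matDeriv (fun s => (f s)⁻¹ * f s) t = 0 := by
    rw [matDeriv_congr (g := fun _ => 1) hΩ
      (fun s hs => Matrix.nonsing_inv_mul _ ((Matrix.isUnit_iff_isUnit_det _).1 (hu s hs))) ht]
    exact matDeriv_eq (hasDerivAt_const t 1)
  rw [h2] at h1
  have h3 := congrArg (· * (f t)⁻¹) (eq_neg_of_add_eq_zero_left h1.symm)
  simpa [Matrix.mul_assoc, Matrix.mul_nonsing_inv _ hdet] using h3

end Calculus

/-- The factorization `ℬ(𝒜(y)) = D(y) + yΨ`. -/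
theorem factor_apply {N : ℕ} {Ω : Set ℝ} {F₀ F₁ F₂ A₀ A₁ B₀ B₁ Ψ y : ℝ → Mat N}
    (hA₀ : DiffOn Ω A₀) (hA₁ : DiffOn Ω A₁) (hA₁u : ∀ t ∈ Ω, IsUnit (A₁ t))
    (hB₁ : B₁ = fun t => (A₁ t)⁻¹ * F₂ t)
    (hB₀ : B₀ = fun t => (A₁ t)⁻¹ * (F₁ t - A₀ t * B₁ t - matDeriv A₁ t * B₁ t))
    (hΨ : Ψ = fun t => A₀ t * B₀ t + matDeriv A₀ t * B₁ t - F₀ t)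
    (hy : TwiceDiffOn Ω y) {t : ℝ} (ht : t ∈ Ω) :
    firstOrd B₀ B₁ (firstOrd A₀ A₁ y) t = secondOrd F₀ F₁ F₂ y t + y t * Ψ t := by
  have hdet := (Matrix.isUnit_iff_isUnit_det _).1 (hA₁u t ht)
  have e₂ : F₂ t = A₁ t * B₁ t := by
    rw [hB₁]; exact (Matrix.mul_nonsing_inv_cancel_left _ _ hdet).symm
  have e₁ : F₁ t = A₁ t * B₀ t + A₀ t * B₁ t + matDeriv A₁ t * B₁ t := by
    have : A₁ t * B₀ t = F₁ t - A₀ t * B₁ t - matDeriv A₁ t * B₁ t := by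
      rw [hB₀]; exact Matrix.mul_nonsing_inv_cancel_left _ _ hdet
    rw [this]; abel
  have e₀ : F₀ t = A₀ t * B₀ t + matDeriv A₀ t * B₁ t - Ψ t := by
    simp only [hΨ, sub_sub_cancel]
  have hd : matDeriv (firstOrd A₀ A₁ y) t =
      (matDeriv y t * A₀ t + y t * matDeriv A₀ t)
        + (matDeriv (matDeriv y) t * A₁ t + matDeriv y t * matDeriv A₁ t) := by
    rw [← matDeriv_mul hy.1 hA₀ ht, ← matDeriv_mul hy.2 hA₁ ht]
    exact matDeriv_add (hy.1.mul hA₀) (hy.2.mul hA₁) ht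
  rw [firstOrd, hd, firstOrd, secondOrd, e₀, e₁, e₂]
  noncomm_ring

/-- For a seed eigenfunction `P` of `D` (`D(P) = Γ·P`) with `P`, `P'`
invertible, and auxiliary invertible `U`, setting `A₀ = −U`, `A₁ = (P')⁻¹PU` and defining
`B₀, B₁, Ψ` as in the quasi-Darboux factorization, one has `Ψ = −P⁻¹ΓP`, the compatibility
condition `ΨA₀ + Ψ'A₁ = A₀A₁⁻¹ΨA₁`, and consequently every invertible eigenfunction `Q` of
`D` (with `D(Q) = Λ·Q`) yields an eigenfunction `𝒜(Q)` of `𝒟` with `𝒟(𝒜(Q)) = Λ·𝒜(Q)`. -/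
theorem quasi_darboux_seed
    (N : ℕ) (Ω : Set ℝ) (hΩ : IsOpen Ω)
    (F₀ F₁ F₂ : ℝ → Mat N)
    (hF₀ : DiffOn Ω F₀) (hF₁ : DiffOn Ω F₁) (hF₂ : DiffOn Ω F₂)
    (P U : ℝ → Mat N) (Γ : Mat N)
    (hP : TwiceDiffOn Ω P)
    (hU : DiffOn Ω U)
    (hPinv : ∀ t ∈ Ω, IsUnit (P t))
    (hP'inv : ∀ t ∈ Ω, IsUnit (matDeriv P t))
    (hUinv : ∀ t ∈ Ω, IsUnit (U t))
    (hPeig : ∀ t ∈ Ω, secondOrd F₀ F₁ F₂ P t = Γ * P t)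
    (A₀ A₁ B₀ B₁ Ψ : ℝ → Mat N)
    (hA₀ : A₀ = fun t => -(U t))
    (hA₁ : A₁ = fun t => (matDeriv P t)⁻¹ * P t * U t)
    (hB₁ : B₁ = fun t => (A₁ t)⁻¹ * F₂ t)
    (hB₀ : B₀ = fun t => (A₁ t)⁻¹ * (F₁ t - A₀ t * B₁ t - matDeriv A₁ t * B₁ t))
    (hΨ : Ψ = fun t => A₀ t * B₀ t + matDeriv A₀ t * B₁ t - F₀ t) :
    -- (i) `Ψ = −P⁻¹ΓP` on `Ω`
    (∀ t ∈ Ω, Ψ t = -((P t)⁻¹ * Γ * P t)) ∧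
    -- (ii) `𝒜(Ψ) = A₀A₁⁻¹ΨA₁` on `Ω`
    (∀ t ∈ Ω, Ψ t * A₀ t + matDeriv Ψ t * A₁ t = A₀ t * (A₁ t)⁻¹ * Ψ t * A₁ t) ∧
    -- consequently: eigenfunctions transfer under `𝒜`
    (∀ (Q : ℝ → Mat N) (Λ : Mat N), TwiceDiffOn Ω Q →
      (∀ t ∈ Ω, IsUnit (Q t)) →
      (∀ t ∈ Ω, secondOrd F₀ F₁ F₂ Q t = Λ * Q t) →
      ∀ t ∈ Ω,
        firstOrd A₀ A₁ (firstOrd B₀ B₁ (firstOrd A₀ A₁ Q)) t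
          - firstOrd A₀ A₁ Q t * ((A₁ t)⁻¹ * Ψ t * A₁ t)
        = Λ * firstOrd A₀ A₁ Q t) := by
  have detP : ∀ t ∈ Ω, IsUnit (P t).det := fun t ht =>
    (Matrix.isUnit_iff_isUnit_det _).1 (hPinv t ht)
  have detP' : ∀ t ∈ Ω, IsUnit (matDeriv P t).det := fun t ht =>
    (Matrix.isUnit_iff_isUnit_det _).1 (hP'inv t ht)
  have dA₀ : DiffOn Ω A₀ := by rw [hA₀]; exact hU.neg
  have dA₁ : DiffOn Ω A₁ := by rw [hA₁]; exact ((hP.2.inv hP'inv).mul hP.1).mul hU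
  have uA₁ : ∀ t ∈ Ω, IsUnit (A₁ t) := by
    intro t ht
    rw [hA₁]
    exact (((Matrix.isUnit_nonsing_inv_iff).2 (hP'inv t ht)).mul (hPinv t ht)).mul (hUinv t ht)
  have detA₁ : ∀ t ∈ Ω, IsUnit (A₁ t).det := fun t ht =>
    (Matrix.isUnit_iff_isUnit_det _).1 (uA₁ t ht)
  have hP'A₁ : ∀ t ∈ Ω, matDeriv P t * A₁ t = P t * U t := by
    intro t ht
    rw [hA₁]
    simp only [Matrix.mul_assoc]
    exact Matrix.mul_nonsing_inv_cancel_left _ _ (detP' t ht)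
  have hAP : ∀ t ∈ Ω, firstOrd A₀ A₁ P t = 0 := by
    intro t ht
    rw [firstOrd, hP'A₁ t ht, hA₀]
    simp
  have hAA : ∀ t ∈ Ω, A₀ t * (A₁ t)⁻¹ = -((P t)⁻¹ * matDeriv P t) := by
    intro t ht
    have h : A₀ t = -((P t)⁻¹ * matDeriv P t) * A₁ t := by
      rw [neg_mul, Matrix.mul_assoc, hP'A₁ t ht,
        Matrix.nonsing_inv_mul_cancel_left _ _ (detP t ht), hA₀]
    rw [h, Matrix.mul_nonsing_inv_cancel_right _ _ (detA₁ t ht)]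
  have part1 : ∀ t ∈ Ω, Ψ t = -((P t)⁻¹ * Γ * P t) := by
    intro t ht
    have h := factor_apply dA₀ dA₁ uA₁ hB₁ hB₀ hΨ hP ht
    have hd : matDeriv (firstOrd A₀ A₁ P) t = 0 := by
      rw [matDeriv_congr (g := fun _ => 0) hΩ hAP ht]
      ext i j
      simp [matDeriv]
    rw [firstOrd, hAP t ht, hd, hPeig t ht, zero_mul, zero_mul, add_zero] at h
    have h2 : P t * Ψ t = -(Γ * P t) := eq_neg_of_add_eq_zero_right h.symm
    rw [← Matrix.nonsing_inv_mul_cancel_left _ (Ψ t) (detP t ht), h2, mul_neg, Matrix.mul_assoc]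
  have dPi := hP.1.inv hPinv
  have dG : DiffOn Ω (fun s => (P s)⁻¹ * (Γ * P s)) := dPi.mul (hP.1.const_mul Γ)
  have hΨG : ∀ t ∈ Ω, Ψ t = -((P t)⁻¹ * (Γ * P t)) := by
    intro t ht
    rw [part1 t ht, Matrix.mul_assoc]
  have hΨ' : ∀ t ∈ Ω, matDeriv Ψ t = (P t)⁻¹ * matDeriv P t * ((P t)⁻¹ * (Γ * P t))
      - (P t)⁻¹ * (Γ * matDeriv P t) := by
    intro t ht
    rw [matDeriv_congr hΩ hΨG ht, matDeriv_neg dG ht, matDeriv_mul dPi (hP.1.const_mul Γ) ht,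
      matDeriv_inv hΩ hP.1 hPinv ht, matDeriv_const_mul Γ hP.1 ht]
    noncomm_ring
  have dΨ : DiffOn Ω Ψ := by
    intro i j t ht
    refine (dG.neg i j t ht).congr_of_eventuallyEq ?_
    filter_upwards [hΩ.mem_nhds ht] with s hs
    rw [hΨG s hs]
  have part2 : ∀ t ∈ Ω, Ψ t * A₀ t + matDeriv Ψ t * A₁ t = A₀ t * (A₁ t)⁻¹ * Ψ t * A₁ t := by
    intro t ht
    have hA : A₀ t = -U t := by rw [hA₀]
    rw [hAA t ht, hΨ' t ht, hΨG t ht, hA, sub_mul,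
      show (P t)⁻¹ * (Γ * matDeriv P t) * A₁ t = (P t)⁻¹ * (Γ * (P t * U t)) by
        rw [← hP'A₁ t ht]; simp only [Matrix.mul_assoc]]
    noncomm_ring
  refine ⟨part1, part2, fun Q Λ hQ _ hQeig t ht => ?_⟩
  have hBA : ∀ s ∈ Ω, firstOrd B₀ B₁ (firstOrd A₀ A₁ Q) s = Λ * Q s + Q s * Ψ s := by
    intro s hs
    rw [factor_apply dA₀ dA₁ uA₁ hB₁ hB₀ hΨ hQ hs, hQeig s hs]
  have hd : matDeriv (firstOrd B₀ B₁ (firstOrd A₀ A₁ Q)) t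
      = Λ * matDeriv Q t + (matDeriv Q t * Ψ t + Q t * matDeriv Ψ t) := by
    rw [matDeriv_congr hΩ hBA ht, matDeriv_add (hQ.1.const_mul Λ) (hQ.1.mul dΨ) ht,
      matDeriv_const_mul Λ hQ.1 ht, matDeriv_mul hQ.1 dΨ ht]
  have hlhs : firstOrd A₀ A₁ (firstOrd B₀ B₁ (firstOrd A₀ A₁ Q)) t
      = Λ * firstOrd A₀ A₁ Q t + (Q t * (Ψ t * A₀ t + matDeriv Ψ t * A₁ t)
        + matDeriv Q t * Ψ t * A₁ t) := by
    rw [firstOrd, hBA t ht, hd, firstOrd]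
    noncomm_ring
  have hcorr : firstOrd A₀ A₁ Q t * ((A₁ t)⁻¹ * Ψ t * A₁ t)
      = Q t * (A₀ t * (A₁ t)⁻¹ * Ψ t * A₁ t) + matDeriv Q t * Ψ t * A₁ t := by
    rw [firstOrd, add_mul]
    congr 1
    · simp only [Matrix.mul_assoc]
    · simp only [Matrix.mul_assoc]
      rw [Matrix.mul_nonsing_inv_cancel_left _ _ (detA₁ t ht)]
  rw [hlhs, hcorr, part2 t ht, add_sub_cancel_right]
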